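/- Let q be a prime power and let N, K, D, w be positive integers with N−D+1 ≤ w ≤ D. If there exists an [N,K,D]_q code, then there exists a (qw, q−1, w)-CPC code {D_1,…,D_M} of size M = q^{K−1} such that any two distinct codewords in the union D_1 ∪ ⋯ ∪ D_M differ in at least 2(D+w−N) coordinates; in particular this code can correct e ≥ w+D−N−1 transmission errors. -/

import Mathlib

/-!
Let `c` be a codeword of minimum weight `D`, and let `T` be a set of `w ≤ D` coordinates inside the
support of `c`. Each codeword `x` is sent to the indicator of the graph of `x` restricted to `T`, a
binary word on `F × T` of weight `w`. The codesets are the images of the cosets of the line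
spanned by `c`; there are `q ^ (K - 1)` of them.

* Two codewords disagreeing in at least `D` places disagree in at least `D - (N - w)` places of `T`
  (`hammingDist_le_comp_add`), and each disagreement on `T` costs two coordinates of the binary word
  (`two_mul_hammingDist_le`). Since `D + w > N`, distinct codewords have distinct graphs, so the
  codesets are disjoint.
* As `c` vanishes nowhere on `T`, the graphs of the `q` words `x + a • c`, `a ∈ F`, are pairwise
  disjoint, so a set of `q - 1` positions misses one of them (`exists_supp_inter_eq_empty`).
-/

/-- The Hamming weight of a binary word. -/
def wt {X : Type*} [Fintype X] (u : X → Bool) : ℕ :=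
  (Finset.univ.filter fun x => u x = true).card

/-- The support of a binary word. -/
def supp {X : Type*} [Fintype X] (u : X → Bool) : Finset X :=
  Finset.univ.filter fun x => u x = true

/-- An `(n,t,w)`-constant-power cooling (CPC) code. -/
def IsCPCCode {X : Type*} [Fintype X] [DecidableEq X] {ι : Type*} (t w : ℕ)
    (C : ι → Set (X → Bool)) : Prop :=
  (∀ i, ∀ u ∈ C i, wt u = w) ∧
  (Pairwise fun i j => Disjoint (C i) (C j)) ∧
  (∀ S : Finset X, S.card = t → ∀ i, ∃ u ∈ C i, supp u ∩ S = ∅)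

/-- `C` is an `[N,K,D]_q` linear code over `F`: a `K`-dimensional subspace of `F^N`
whose minimum Hamming distance equals `D`. -/
def IsLinearCode {F : Type*} [Field F] [Fintype F] [DecidableEq F] (N K D : ℕ)
    (C : Submodule F (Fin N → F)) : Prop :=
  Module.finrank F C = K ∧
  (∀ u ∈ C, ∀ v ∈ C, u ≠ v → D ≤ hammingDist u v) ∧
  (∃ u ∈ C, ∃ v ∈ C, u ≠ v ∧ hammingDist u v = D)

section GraphWord

variable {F X ι κ : Type*} [DecidableEq F]

/-- The indicator of the graph `{(x (g i), i)}` of `x ∘ g`, transported along a labelling `e` of the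
pairs `F × ι` by a set `X` of positions. -/
def graphWord (e : X ≃ F × ι) (g : ι ↪ κ) (x : κ → F) : X → Bool :=
  fun p => decide (x (g (e p).2) = (e p).1)

variable [Fintype X]

theorem wt_graphWord [Fintype ι] (e : X ≃ F × ι) (g : ι ↪ κ) (x : κ → F) :
    wt (graphWord e g x) = Fintype.card ι := by
  unfold wt
  rw [← Finset.card_univ]
  symm
  apply Finset.card_bij (fun i _ => e.symm (x (g i), i))
  · intro i _
    simp [graphWord]
  · intro i _ j _ h
    simpa using congrArg Prod.snd (e.symm.injective h)
  · intro p hp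
    refine ⟨(e p).2, Finset.mem_univ _, ?_⟩
    have : x (g (e p).2) = (e p).1 := by simpa [graphWord] using hp
    rw [this, Prod.mk.eta, Equiv.symm_apply_apply]

/-- At each index `i` where `x ∘ g` and `y ∘ g` disagree, the two positions `(x (g i), i)` and
`(y (g i), i)` each belong to exactly one of the two graphs. -/
theorem two_mul_hammingDist_le [Fintype ι] (e : X ≃ F × ι) (g : ι ↪ κ) (x y : κ → F) :
    2 * hammingDist (x ∘ g) (y ∘ g) ≤ hammingDist (graphWord e g x) (graphWord e g y) := by
  classical
  let A : Finset ι := Finset.univ.filter fun i => x (g i) ≠ y (g i)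
  have hinj : ∀ z : κ → F, Function.Injective fun i => e.symm (z (g i), i) := by
    intro z i j h
    simpa using congrArg Prod.snd (e.symm.injective h)
  have hdisj : Disjoint (A.image fun i => e.symm (x (g i), i))
      (A.image fun i => e.symm (y (g i), i)) := by
    rw [Finset.disjoint_left]
    intro p hp hp'
    obtain ⟨i, hi, rfl⟩ := Finset.mem_image.mp hp
    obtain ⟨j, _, hj⟩ := Finset.mem_image.mp hp'
    have h := Prod.mk.inj (e.symm.injective hj)
    obtain ⟨h1, rfl⟩ := h
    exact (Finset.mem_filter.mp hi).2 h1.symm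
  have hcard := Finset.card_union_of_disjoint hdisj
  rw [Finset.card_image_of_injective _ (hinj x), Finset.card_image_of_injective _ (hinj y)] at hcard
  calc 2 * hammingDist (x ∘ g) (y ∘ g) = A.card + A.card := two_mul _
    _ = _ := hcard.symm
    _ ≤ hammingDist (graphWord e g x) (graphWord e g y) := by
      apply Finset.card_le_card
      intro p hp
      rw [Finset.mem_filter]
      refine ⟨Finset.mem_univ _, ?_⟩
      rcases Finset.mem_union.mp hp with hp | hp
      all_goals
        obtain ⟨i, hi, rfl⟩ := Finset.mem_image.mp hp
        have hi' := (Finset.mem_filter.mp hi).2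
        simp [graphWord, hi', hi'.symm]

/-- Discarding the coordinates outside the range of `g` loses at most one unit of distance each. -/
theorem hammingDist_le_comp_add [Fintype ι] [Fintype κ] (g : ι ↪ κ) (x y : κ → F) :
    hammingDist x y ≤ hammingDist (x ∘ g) (y ∘ g) + (Fintype.card κ - Fintype.card ι) := by
  classical
  have hsub : (Finset.univ.filter fun j => x j ≠ y j) ⊆
      (Finset.univ.filter fun i => x (g i) ≠ y (g i)).map g ∪ (Finset.univ.map g)ᶜ := by
    intro j hj
    by_cases hjg : ∃ i, g i = j
    · obtain ⟨i, rfl⟩ := hjg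
      simpa using hj
    · simp only [Finset.mem_union, Finset.mem_compl, Finset.mem_map, Finset.mem_univ, true_and]
      exact Or.inr hjg
  refine (Finset.card_le_card hsub).trans ((Finset.card_union_le _ _).trans ?_)
  rw [Finset.card_map, Finset.card_compl, Finset.card_map, Finset.card_univ]
  rfl

/-- If `c` has no zero on the range of `g`, the graphs of the translates `x + a • c` are pairwise
disjoint, so a set with fewer than `|F|` positions cannot meet all of them. -/
theorem exists_supp_inter_eq_empty [DecidableEq X] {F : Type*} [Field F] [Fintype F]
    [DecidableEq F] (e : X ≃ F × ι) (g : ι ↪ κ) (x c : κ → F) (hc : ∀ i, c (g i) ≠ 0)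
    (S : Finset X) (hS : S.card < Fintype.card F) :
    ∃ a : F, supp (graphWord e g (x + a • c)) ∩ S = ∅ := by
  by_contra! h
  have h' : ∀ a : F, ∃ p ∈ S, (x + a • c) (g (e p).2) = (e p).1 := by
    intro a
    obtain ⟨p, hp⟩ := h a
    rw [Finset.mem_inter] at hp
    exact ⟨p, hp.2, by simpa [supp, graphWord] using hp.1⟩
  choose p hpS hp using h'
  have hinj : Function.Injective p := by
    intro a b hab
    have hb := hp b
    rw [← hab, ← hp a] at hb
    simpa [hc] using hb.symm
  have := Finset.card_le_card_of_injOn (s := Finset.univ) (t := S) p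
    (fun a _ => hpS a) hinj.injOn
  rw [Finset.card_univ] at this
  omega

end GraphWord

/-- Let `q` be a prime power and `N, K, D, w` positive integers with `N−D+1 ≤ w ≤ D`.
If there exists an `[N,K,D]_q` code, then there exists a `(qw, q−1, w)`-CPC code
`{D_1,…,D_M}` of size `M = q^{K−1}` in which any two distinct codewords from the union
`D_1 ∪ ⋯ ∪ D_M` differ in at least `2(D+w−N)` coordinates (hence the code can correct
`e ≥ w+D−N−1` errors). -/
theorem cpecc_from_linear_code (q N K D w : ℕ) (hq : IsPrimePow q)
    (hN : 0 < N) (hK : 0 < K) (hD : 0 < D) (hw : 0 < w)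
    (h1 : N - D + 1 ≤ w) (h2 : w ≤ D)
    (F : Type*) [Field F] [Fintype F] [DecidableEq F] (hF : Fintype.card F = q)
    (C : Submodule F (Fin N → F)) (hC : IsLinearCode N K D C) :
    ∃ Dc : Fin (q ^ (K - 1)) → Set (Fin (q * w) → Bool),
      IsCPCCode (q - 1) w Dc ∧
      ∀ u ∈ ⋃ i, Dc i, ∀ v ∈ ⋃ i, Dc i, u ≠ v →
        2 * (D + w - N) ≤ hammingDist u v := by
  obtain ⟨hfr, hdist, u₀, hu₀, v₀, hv₀, hne, hDeq⟩ := hC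
  have hDN : D ≤ N := by
    have := hammingDist_le_card_fintype (x := u₀) (y := v₀)
    rw [Fintype.card_fin] at this
    omega
  -- A nonzero codeword of minimum weight; its support has room for `w` coordinates.
  let c : C := ⟨u₀, hu₀⟩ - ⟨v₀, hv₀⟩
  have hc0 : c ≠ 0 := by
    intro h
    exact hne (congrArg Subtype.val (sub_eq_zero.mp h))
  obtain ⟨T, hTsub, hTcard⟩ := Finset.exists_subset_card_eq
    (s := Finset.univ.filter fun j => u₀ j ≠ v₀ j) (n := w) (by
      have : (Finset.univ.filter fun j => u₀ j ≠ v₀ j).card = D := hDeq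
      omega)
  let g : Fin w ↪ Fin N := (T.orderEmbOfFin hTcard).toEmbedding
  have hcg : ∀ i, (c : Fin N → F) (g i) ≠ 0 := by
    intro i
    have h := hTsub (Finset.orderEmbOfFin_mem T hTcard i)
    exact sub_ne_zero.mpr (Finset.mem_filter.mp h).2
  have e : Fin (q * w) ≃ F × Fin w := Fintype.equivOfCardEq (by simp [hF])
  have hqcard : Nat.card (C ⧸ Submodule.span F {c}) = q ^ (K - 1) := by
    rw [Module.natCard_eq_pow_finrank (K := F), Nat.card_eq_fintype_card, hF]
    congr 1
    have h := Submodule.finrank_quotient_add_finrank (Submodule.span F {c})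
    rw [finrank_span_singleton hc0, hfr] at h
    omega
  have : Finite (C ⧸ Submodule.span F {c}) := Module.finite_of_finite F
  have φ : Fin (q ^ (K - 1)) ≃ C ⧸ Submodule.span F {c} :=
    (Finite.equivFinOfCardEq hqcard).symm
  have hsep : ∀ x y : C, graphWord e g x ≠ graphWord e g y →
      2 * (D + w - N) ≤ hammingDist (graphWord e g x) (graphWord e g y) := by
    intro x y hxy
    have hxy' : (x : Fin N → F) ≠ y := fun h => hxy (by rw [h])
    have h3 := hdist x x.2 y y.2 hxy'
    have h4 := hammingDist_le_comp_add g (x : Fin N → F) y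
    rw [Fintype.card_fin, Fintype.card_fin] at h4
    have h5 := two_mul_hammingDist_le e g (x : Fin N → F) y
    omega
  have hinj : ∀ x y : C, graphWord e g x = graphWord e g y → x = y := by
    intro x y hxy
    by_contra hxy'
    have h3 := hdist x x.2 y y.2 (fun h => hxy' (Subtype.ext h))
    have h4 := hammingDist_le_comp_add g (x : Fin N → F) y
    rw [Fintype.card_fin, Fintype.card_fin] at h4
    have h5 := two_mul_hammingDist_le e g (x : Fin N → F) y
    rw [hxy, hammingDist_self] at h5
    omega
  refine ⟨fun i => {u | ∃ x : C, Submodule.Quotient.mk x = φ i ∧ graphWord e g x = u},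
    ⟨?_, ?_, ?_⟩, ?_⟩
  · rintro i _ ⟨x, -, rfl⟩
    exact (wt_graphWord e g x).trans (Fintype.card_fin w)
  · intro i j hij
    rw [Set.disjoint_left]
    rintro _ ⟨x, hx, rfl⟩ ⟨y, hy, hyx⟩
    rw [hinj y x hyx, hx] at hy
    exact hij (φ.injective hy)
  · intro S hS i
    obtain ⟨x, hx⟩ := Submodule.Quotient.mk_surjective _ (φ i)
    obtain ⟨a, ha⟩ := exists_supp_inter_eq_empty e g (x : Fin N → F) c hcg S (by
      have := hq.pos
      omega)
    refine ⟨_, ⟨x + a • c, ?_, rfl⟩, ha⟩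
    rw [← hx, Submodule.Quotient.eq]
    simpa using Submodule.smul_mem _ a (Submodule.mem_span_singleton_self c)
  · intro u hu v hv huv
    obtain ⟨i, x, -, rfl⟩ := Set.mem_iUnion.mp hu
    obtain ⟨j, y, -, rfl⟩ := Set.mem_iUnion.mp hv
    exact hsep x y huv
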